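/- Let Z be a compact metric space, g : Z → Z a continuous map, and φ : Z → ℝ^k a continuous function. If the pointwise rotation set rot_p(Z,g,φ) is convex, then rot_m(Z,g,φ) = rot_p(Z,g,φ) = rot_MZ(Z,g,φ). -/

import Mathlib

open Filter Topology MeasureTheory

noncomputable def cocycle {Z : Type*} {k : ℕ} (g : Z → Z) (φ : Z → Fin k → ℝ) (z : Z) (r : ℕ) :
    Fin k → ℝ := ∑ i ∈ Finset.range r, φ (g^[i] z)

/-- The Birkhoff average of `φ` along the `g`-orbit of `z` exists and equals `v`. -/
def hasAvg {Z : Type*} {k : ℕ} (g : Z → Z) (φ : Z → Fin k → ℝ) (z : Z) (v : Fin k → ℝ) : Prop :=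
  Tendsto (fun r : ℕ => (r : ℝ)⁻¹ • cocycle g φ z r) atTop (nhds v)

/-- The pointwise rotation set. -/
def rotP {Z : Type*} {k : ℕ} (g : Z → Z) (φ : Z → Fin k → ℝ) : Set (Fin k → ℝ) :=
  {v | ∃ z, hasAvg g φ z v}

/-- The pointwise rotation set of points in a subset `W`. -/
def rotPOn {Z : Type*} {k : ℕ} (g : Z → Z) (φ : Z → Fin k → ℝ) (W : Set Z) : Set (Fin k → ℝ) :=
  {v | ∃ z ∈ W, hasAvg g φ z v}

/-- The Misiurewicz–Ziemian rotation set. -/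
def rotMZ {Z : Type*} {k : ℕ} (g : Z → Z) (φ : Z → Fin k → ℝ) : Set (Fin k → ℝ) :=
  {v | ∃ (z : ℕ → Z) (r : ℕ → ℕ), Tendsto r atTop atTop ∧
    Tendsto (fun i => (r i : ℝ)⁻¹ • cocycle g φ (z i) (r i)) atTop (nhds v)}

/-- The measure rotation set. -/
def rotM {Z : Type*} [MeasurableSpace Z] {k : ℕ} (g : Z → Z) (φ : Z → Fin k → ℝ) :
    Set (Fin k → ℝ) :=
  {v | ∃ μ : Measure Z, IsProbabilityMeasure μ ∧ MeasurePreserving g μ μ ∧ (∫ z, φ z ∂μ) = v}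

/-- The set of recurrent points of `g`. -/
def RecSet {Z : Type*} [TopologicalSpace Z] (g : Z → Z) : Set Z :=
  {z | ∃ r : ℕ → ℕ, Tendsto r atTop atTop ∧ Tendsto (fun i => g^[r i] z) atTop (nhds z)}

/-!
By Birkhoff's theorem the mean of `φ` under an invariant probability measure is the mean of the
pointwise limits of its Birkhoff averages, and these limits lie in the pointwise rotation set. The
mean of a function with values in a finite-dimensional convex set lies in that set even when the
set is not closed, since otherwise a supporting hyperplane at the mean contains almost all values
and the dimension drops. Conversely, a weak limit of the empirical measures of orbit segments of
growing length is invariant, so a limit of Birkhoff averages over them is the mean of `φ` under an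
invariant measure.
-/

section ConvexMean

theorem exists_linearMap_ne_zero_forall_apply_le_of_affineSpan_ne_top {E : Type*} [AddCommGroup E]
    [Module ℝ E] {C : Set E} (hne : C.Nonempty) (hspan : affineSpan ℝ C ≠ ⊤) (x : E) :
    ∃ l : E →ₗ[ℝ] ℝ, l ≠ 0 ∧ ∀ a ∈ C, l a ≤ l x := by
  have hdir : (affineSpan ℝ C).direction < ⊤ := lt_top_iff_ne_top.2 <|
    (AffineSubspace.direction_eq_top_iff_of_nonempty ((affineSpan_nonempty ℝ).2 hne)).not.2 hspan
  obtain ⟨l, hl_ne, hl⟩ := Submodule.exists_le_ker_of_lt_top _ hdir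
  obtain ⟨c, hc⟩ := hne
  have hconst : ∀ a ∈ C, l a = l c := fun a ha => sub_eq_zero.1 <| by
    rw [← map_sub]
    exact hl (AffineSubspace.vsub_mem_direction (subset_affineSpan ℝ C ha)
      (subset_affineSpan ℝ C hc))
  rcases le_total (l c) (l x) with hle | hle
  · exact ⟨l, hl_ne, fun a ha => (hconst a ha).trans_le hle⟩
  · exact ⟨-l, neg_ne_zero.2 hl_ne, fun a ha => by simpa [hconst a ha] using hle⟩

variable {E : Type*} [NormedAddCommGroup E] [NormedSpace ℝ E] [FiniteDimensional ℝ E] {C : Set E}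

theorem exists_linearMap_ne_zero_forall_apply_le (hC : Convex ℝ C) (hne : C.Nonempty) {x : E}
    (hx : x ∉ C) : ∃ l : E →ₗ[ℝ] ℝ, l ≠ 0 ∧ ∀ a ∈ C, l a ≤ l x := by
  by_cases hspan : affineSpan ℝ C = ⊤
  · have hint := hC.interior_nonempty_iff_affineSpan_eq_top.2 hspan
    obtain ⟨l, hl⟩ := geometric_hahn_banach_open_point hC.interior isOpen_interior
      fun h => hx (interior_subset h)
    have hle : closure (interior C) ⊆ {a | l a ≤ l x} :=
      closure_minimal (fun a ha => (hl a ha).le) (isClosed_le l.continuous continuous_const)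
    rw [hC.closure_interior_eq_closure_of_nonempty_interior hint] at hle
    refine ⟨l, fun h => ?_, fun a ha => hle (subset_closure ha)⟩
    obtain ⟨a, ha⟩ := hint
    exact (hl a ha).ne ((LinearMap.congr_fun h a).trans (LinearMap.congr_fun h x).symm)
  · exact exists_linearMap_ne_zero_forall_apply_le_of_affineSpan_ne_top hne hspan x

theorem integral_mem_of_convex {Ω : Type*} [MeasurableSpace Ω] {μ : Measure Ω}
    [IsProbabilityMeasure μ] {f : Ω → E} (hC : Convex ℝ C) (hf : Integrable f μ)
    (hfC : ∀ᵐ ω ∂μ, f ω ∈ C) : ∫ ω, f ω ∂μ ∈ C := by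
  have hcomplete : CompleteSpace E := FiniteDimensional.complete ℝ E
  set m := ∫ ω, f ω ∂μ with hm
  by_contra hmC
  -- A nontrivial supporting functional at `m` would cut this minimal subspace down further.
  obtain ⟨V, hV, hVmin⟩ := exists_minimal_of_wellFoundedLT
    (fun V : Submodule ℝ E => ∀ᵐ ω ∂μ, f ω - m ∈ V) ⟨⊤, by simp⟩
  let D : Set V := {y | m + (y : E) ∈ C}
  have hD : Convex ℝ D := (hC.translate_preimage_right m).linear_preimage V.subtype
  have hD_ne : D.Nonempty := by
    obtain ⟨ω, hωC, hωV⟩ := (hfC.and hV).exists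
    exact ⟨⟨f ω - m, hωV⟩, by simpa [D] using hωC⟩
  obtain ⟨l, hl_ne, hl⟩ := exists_linearMap_ne_zero_forall_apply_le hD hD_ne (x := 0)
    (by simpa [D] using hmC)
  obtain ⟨L₀, hL₀⟩ := l.exists_extend
  let L : E →L[ℝ] ℝ := L₀.toContinuousLinearMap
  have hLV : ∀ y : V, L y = l y := LinearMap.congr_fun hL₀
  have hfm : Integrable (fun ω => f ω - m) μ := hf.sub (integrable_const m)
  have hL_le : ∀ᵐ ω ∂μ, L (f ω - m) ≤ 0 := by
    filter_upwards [hfC, hV] with ω hωC hωV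
    simpa [hLV ⟨_, hωV⟩] using hl ⟨f ω - m, hωV⟩ (by simpa [D] using hωC)
  have hL_integral : ∫ ω, L (f ω - m) ∂μ = ∫ _, (0 : ℝ) ∂μ := by
    rw [L.integral_comp_comm hfm, integral_sub hf (integrable_const m)]
    simp [hm]
  have hL_zero : ∀ᵐ ω ∂μ, L (f ω - m) = 0 :=
    (integral_eq_iff_of_ae_le (L.integrable_comp hfm) (integrable_zero _ _ _) hL_le).1 hL_integral
  have hV_le : V ≤ V ⊓ L₀.ker := hVmin
    (by filter_upwards [hV, hL_zero] with ω hωV hω0 using ⟨hωV, hω0⟩) inf_le_left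
  exact hl_ne (LinearMap.ext fun y => (hLV y).symm.trans (hV_le y.2).2)

end ConvexMean

section MaximalErgodic

variable {X : Type*} {T : X → X} {f : X → ℝ}

/-- The maximal function `max (S₀ f, …, Sₙ f)` of the Birkhoff sums of `f`, to which Garsia's
proof of the maximal ergodic theorem applies. It is nonnegative because `S₀ f = 0`. -/
noncomputable def birkhoffMax (T : X → X) (f : X → ℝ) (n : ℕ) : X → ℝ :=
  partialSups (birkhoffSum T f) n

theorem birkhoffSum_le_birkhoffMax {m n : ℕ} (hmn : m ≤ n) (x : X) :
    birkhoffSum T f m x ≤ birkhoffMax T f n x :=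
  le_partialSups_of_le (birkhoffSum T f) hmn x

theorem birkhoffMax_mono : Monotone (birkhoffMax T f) :=
  (partialSups (birkhoffSum T f)).monotone

theorem birkhoffMax_nonneg (n : ℕ) (x : X) : 0 ≤ birkhoffMax T f n x :=
  (birkhoffSum_zero T f x).ge.trans (birkhoffSum_le_birkhoffMax n.zero_le x)

theorem birkhoffMax_le_max_zero_add (n : ℕ) (x : X) :
    birkhoffMax T f n x ≤ max 0 (f x + birkhoffMax T f n (T x)) := by
  rw [birkhoffMax, Pi.partialSups_apply, partialSups_le_iff]
  rintro (_ | j) hj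
  · exact (birkhoffSum_zero T f x).trans_le (le_max_left _ _)
  · rw [birkhoffSum_succ']
    exact le_max_of_le_right (by gcongr; exact birkhoffSum_le_birkhoffMax (Nat.le_of_succ_le hj) _)

theorem birkhoffMax_sub_comp_le_indicator (n : ℕ) (x : X) :
    birkhoffMax T f n x - birkhoffMax T f n (T x) ≤
      {y | 0 < birkhoffMax T f n y}.indicator f x := by
  have hstep := birkhoffMax_le_max_zero_add (T := T) (f := f) n x
  by_cases hx : 0 < birkhoffMax T f n x
  · have hle := (le_max_iff.1 hstep).resolve_left hx.not_ge
    simpa [Set.indicator_of_mem (s := {y | 0 < birkhoffMax T f n y}) hx] using hle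
  · rw [Set.indicator_of_notMem (s := {y | 0 < birkhoffMax T f n y}) hx]
    linarith [birkhoffMax_nonneg (T := T) (f := f) n (T x)]

variable [MeasurableSpace X] {μ : Measure X}

theorem measurable_birkhoffSum (hT : Measurable T) (hf : Measurable f) (n : ℕ) :
    Measurable (birkhoffSum T f n) :=
  Finset.measurable_fun_sum _ fun i _ => hf.comp (hT.iterate i)

theorem integrable_birkhoffSum {E : Type*} [NormedAddCommGroup E] {f : X → E}
    (hT : MeasurePreserving T μ μ) (hf : Integrable f μ) (n : ℕ) :
    Integrable (birkhoffSum T f n) μ :=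
  integrable_finsetSum _ fun i _ => (hT.iterate i).integrable_comp_of_integrable hf

theorem measurable_birkhoffMax (hT : Measurable T) (hf : Measurable f) (n : ℕ) :
    Measurable (birkhoffMax T f n) := by
  induction n with
  | zero => simpa [birkhoffMax] using measurable_birkhoffSum hT hf 0
  | succ n ih => simpa [birkhoffMax] using ih.sup (measurable_birkhoffSum hT hf (n + 1))

theorem integrable_birkhoffMax (hT : MeasurePreserving T μ μ) (hf : Integrable f μ) (n : ℕ) :
    Integrable (birkhoffMax T f n) μ := by
  induction n with
  | zero => simp [birkhoffMax]
  | succ n ih => simpa [birkhoffMax] using ih.sup (integrable_birkhoffSum hT hf (n + 1))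

theorem integral_comp_eq_of_measurePreserving {Y E : Type*} [MeasurableSpace Y]
    [NormedAddCommGroup E] [NormedSpace ℝ E] {ν : Measure Y} {S : X → Y} {f : Y → E}
    (hS : MeasurePreserving S μ ν) (hf : AEStronglyMeasurable f ν) :
    ∫ x, f (S x) ∂μ = ∫ y, f y ∂ν := by
  rw [← hS.map_eq] at hf ⊢
  exact (integral_map hS.aemeasurable hf).symm

theorem setIntegral_birkhoffMax_pos_nonneg (hT : MeasurePreserving T μ μ) (hfm : Measurable f)
    (hf : Integrable f μ) (n : ℕ) : 0 ≤ ∫ x in {x | 0 < birkhoffMax T f n x}, f x ∂μ := by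
  have hM := integrable_birkhoffMax hT hf n
  have hMT : Integrable (fun x => birkhoffMax T f n (T x)) μ := hT.integrable_comp_of_integrable hM
  have hpos : MeasurableSet {x | 0 < birkhoffMax T f n x} :=
    measurableSet_lt measurable_const (measurable_birkhoffMax hT.measurable hfm n)
  calc
    0 = ∫ x, (birkhoffMax T f n x - birkhoffMax T f n (T x)) ∂μ := by
      rw [integral_sub hM hMT, integral_comp_eq_of_measurePreserving hT hM.aestronglyMeasurable,
        sub_self]
    _ ≤ ∫ x, {x | 0 < birkhoffMax T f n x}.indicator f x ∂μ :=
      integral_mono (hM.sub hMT) (hf.indicator hpos) (birkhoffMax_sub_comp_le_indicator n)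
    _ = ∫ x in {x | 0 < birkhoffMax T f n x}, f x ∂μ := integral_indicator hpos

theorem integral_nonneg_of_ae_exists_birkhoffSum_pos (hT : MeasurePreserving T μ μ)
    (hfm : Measurable f) (hf : Integrable f μ) (h : ∀ᵐ x ∂μ, ∃ n, 0 < birkhoffSum T f n x) :
    0 ≤ ∫ x, f x ∂μ := by
  have hlim := tendsto_setIntegral_of_monotone (s := fun n => {x | 0 < birkhoffMax T f n x})
    (fun n => measurableSet_lt measurable_const (measurable_birkhoffMax hT.measurable hfm n))
    (fun _ _ hmn x hx => lt_of_lt_of_le hx (birkhoffMax_mono hmn x)) hf.integrableOn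
  have hunion : ⋃ n, {x | 0 < birkhoffMax T f n x} =ᵐ[μ] Set.univ := by
    rw [eventuallyEq_univ]
    filter_upwards [h] with x ⟨n, hn⟩
    exact Set.mem_iUnion.2 ⟨n, hn.trans_le (birkhoffSum_le_birkhoffMax le_rfl x)⟩
  rw [setIntegral_congr_set hunion, setIntegral_univ] at hlim
  exact ge_of_tendsto' hlim (setIntegral_birkhoffMax_pos_nonneg hT hfm hf)

end MaximalErgodic

section PointwiseErgodic

variable {X : Type*} {T : X → X} {f : X → ℝ}

/-- The points along whose orbit the Birkhoff sums of `f` are unbounded above. Taken for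
`f - c`, it lies between the sets where the upper Birkhoff average of `f` is `> c` and `≥ c`, and
replaces them because its invariance is immediate. -/
def unboundedBirkhoffSumSet (T : X → X) (f : X → ℝ) : Set X :=
  {x | ¬BddAbove (Set.range fun n => birkhoffSum T f n x)}

theorem preimage_unboundedBirkhoffSumSet :
    T ⁻¹' unboundedBirkhoffSumSet T f = unboundedBirkhoffSumSet T f := by
  ext x
  refine not_congr ⟨?_, ?_⟩
  · rintro ⟨K, hK⟩
    refine ⟨max 0 (f x + K), ?_⟩
    rintro _ ⟨_ | n, rfl⟩
    · simp
    · simpa only [birkhoffSum_succ'] using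
        le_max_of_le_right (add_le_add_right (hK ⟨n, rfl⟩) (f x))
  · rintro ⟨K, hK⟩
    refine ⟨K - f x, ?_⟩
    rintro _ ⟨n, rfl⟩
    have hn : birkhoffSum T f (n + 1) x ≤ K := hK ⟨n + 1, rfl⟩
    rw [birkhoffSum_succ'] at hn
    exact le_sub_iff_add_le'.2 hn

theorem exists_birkhoffSum_pos_of_mem_unboundedBirkhoffSumSet {x : X}
    (hx : x ∈ unboundedBirkhoffSumSet T f) : ∃ n, 0 < birkhoffSum T f n x := by
  by_contra! hle
  exact hx ⟨0, Set.forall_mem_range.2 hle⟩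

theorem birkhoffSum_sub_const (c : ℝ) (n : ℕ) (x : X) :
    birkhoffSum T (fun y => f y - c) n x = n * (birkhoffAverage ℝ T f n x - c) := by
  rcases eq_or_ne n 0 with rfl | hn
  · simp
  · simp only [birkhoffSum, birkhoffAverage, Finset.sum_sub_distrib, Finset.sum_const,
      Finset.card_range, smul_eq_mul, nsmul_eq_mul]
    field_simp

theorem mem_unboundedBirkhoffSumSet_of_frequently_lt {b c : ℝ} (hcb : c < b) {x : X}
    (hx : ∃ᶠ n in atTop, b < birkhoffAverage ℝ T f n x) :
    x ∈ unboundedBirkhoffSumSet T fun y => f y - c := by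
  rintro ⟨K, hK⟩
  have hlarge : ∀ᶠ n : ℕ in atTop, K < n * (b - c) :=
    (tendsto_natCast_atTop_atTop.atTop_mul_const (sub_pos.2 hcb)).eventually_gt_atTop K
  obtain ⟨n, hn, hKn⟩ := (hx.and_eventually hlarge).exists
  have hle : n * (birkhoffAverage ℝ T f n x - c) ≤ K := birkhoffSum_sub_const c n x ▸ hK ⟨n, rfl⟩
  have hmul : n * (b - c) ≤ n * (birkhoffAverage ℝ T f n x - c) := by gcongr
  linarith

theorem isBoundedUnder_le_birkhoffAverage_of_notMem {c : ℝ} {x : X}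
    (hx : x ∉ unboundedBirkhoffSumSet T fun y => f y - c) :
    IsBoundedUnder (· ≤ ·) atTop fun n => birkhoffAverage ℝ T f n x := by
  obtain ⟨K, hK⟩ := not_not.1 hx
  refine ⟨c + max K 0, eventually_map.2 ?_⟩
  filter_upwards [eventually_ge_atTop 1] with n hn
  have hn' : (1 : ℝ) ≤ n := mod_cast hn
  have hle : n * (birkhoffAverage ℝ T f n x - c) ≤ K := birkhoffSum_sub_const c n x ▸ hK ⟨n, rfl⟩
  by_contra! hlt
  nlinarith [le_max_left K 0, le_max_right K 0]

variable [MeasurableSpace X] {μ : Measure X}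

theorem measurableSet_unboundedBirkhoffSumSet (hT : Measurable T) (hf : Measurable f) :
    MeasurableSet (unboundedBirkhoffSumSet T f) :=
  (measurableSet_bddAbove_range (measurable_birkhoffSum hT hf)).compl

theorem setIntegral_nonneg_of_subset_unboundedBirkhoffSumSet (hT : MeasurePreserving T μ μ)
    (hfm : Measurable f) {B : Set X} (hf : IntegrableOn f B μ) (hB : MeasurableSet B)
    (hTB : T ⁻¹' B = B) (hBf : B ⊆ unboundedBirkhoffSumSet T f) : 0 ≤ ∫ x in B, f x ∂μ := by
  have hT_restrict : MeasurePreserving T (μ.restrict B) (μ.restrict B) := by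
    simpa only [hTB] using hT.restrict_preimage hB
  refine integral_nonneg_of_ae_exists_birkhoffSum_pos hT_restrict hfm hf ?_
  filter_upwards [ae_restrict_mem hB] with x hx
  exact exists_birkhoffSum_pos_of_mem_unboundedBirkhoffSumSet (hBf hx)

variable [IsFiniteMeasure μ]

theorem mul_measureReal_le_setIntegral_of_subset_unboundedBirkhoffSumSet
    (hT : MeasurePreserving T μ μ) (hfm : Measurable f) (hf : Integrable f μ) {B : Set X}
    (hB : MeasurableSet B) (hTB : T ⁻¹' B = B) {c : ℝ}
    (hBf : B ⊆ unboundedBirkhoffSumSet T fun x => f x - c) :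
    c * μ.real B ≤ ∫ x in B, f x ∂μ := by
  have hnonneg := setIntegral_nonneg_of_subset_unboundedBirkhoffSumSet hT (hfm.sub_const c)
    (hf.sub (integrable_const c)).integrableOn hB hTB hBf
  rw [integral_sub hf.integrableOn (integrable_const c), setIntegral_const, smul_eq_mul] at hnonneg
  linarith

theorem ae_notMem_inter_unboundedBirkhoffSumSet (hT : MeasurePreserving T μ μ)
    (hfm : Measurable f) (hf : Integrable f μ) {a b : ℝ} (hab : a < b) :
    ∀ᵐ x ∂μ, x ∉ unboundedBirkhoffSumSet T (fun y => f y - b) ∩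
      unboundedBirkhoffSumSet T (fun y => (-f) y - -a) := by
  set B := unboundedBirkhoffSumSet T (fun y => f y - b) ∩
    unboundedBirkhoffSumSet T (fun y => (-f) y - -a) with hB_def
  have hB : MeasurableSet B :=
    (measurableSet_unboundedBirkhoffSumSet hT.measurable (hfm.sub_const b)).inter
      (measurableSet_unboundedBirkhoffSumSet hT.measurable (hfm.neg.sub_const (-a)))
  have hTB : T ⁻¹' B = B := by
    rw [hB_def, Set.preimage_inter, preimage_unboundedBirkhoffSumSet,
      preimage_unboundedBirkhoffSumSet]
  have hlower := mul_measureReal_le_setIntegral_of_subset_unboundedBirkhoffSumSet hT hfm hf hB hTB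
    Set.inter_subset_left
  have hupper := mul_measureReal_le_setIntegral_of_subset_unboundedBirkhoffSumSet hT hfm.neg hf.neg
    hB hTB Set.inter_subset_right
  simp only [Pi.neg_apply, integral_neg] at hupper
  have hzero : μ.real B = 0 := by nlinarith [measureReal_nonneg (μ := μ) (s := B)]
  exact measure_eq_zero_iff_ae_notMem.1 ((measureReal_eq_zero_iff).1 hzero)

theorem ae_isBoundedUnder_le_birkhoffAverage (hT : MeasurePreserving T μ μ)
    (hfm : Measurable f) (hf : Integrable f μ) :
    ∀ᵐ x ∂μ, IsBoundedUnder (· ≤ ·) atTop fun n => birkhoffAverage ℝ T f n x := by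
  set B := ⋂ c : ℕ, unboundedBirkhoffSumSet T fun x => f x - c with hB_def
  have hB : MeasurableSet B := .iInter fun c =>
    measurableSet_unboundedBirkhoffSumSet hT.measurable (hfm.sub_const c)
  have hTB : T ⁻¹' B = B := by
    simp only [hB_def, Set.preimage_iInter, preimage_unboundedBirkhoffSumSet]
  have hbound : ∀ c : ℕ, c * μ.real B ≤ ∫ x in B, f x ∂μ := fun c =>
    mul_measureReal_le_setIntegral_of_subset_unboundedBirkhoffSumSet hT hfm hf hB hTB
      (Set.iInter_subset _ c)
  have hzero : μ.real B = 0 := by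
    by_contra hne
    obtain ⟨c, hc⟩ := Archimedean.arch (∫ x in B, f x ∂μ + 1)
      (lt_of_le_of_ne measureReal_nonneg (Ne.symm hne))
    rw [nsmul_eq_mul] at hc
    linarith [hbound c]
  filter_upwards [measure_eq_zero_iff_ae_notMem.1 ((measureReal_eq_zero_iff).1 hzero)] with x hx
  obtain ⟨c, hc⟩ := not_forall.1 (Set.mem_iInter.not.1 hx)
  exact isBoundedUnder_le_birkhoffAverage_of_notMem hc

theorem ae_exists_tendsto_birkhoffAverage_of_measurable (hT : MeasurePreserving T μ μ)
    (hfm : Measurable f) (hf : Integrable f μ) :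
    ∀ᵐ x ∂μ, ∃ c, Tendsto (fun n => birkhoffAverage ℝ T f n x) atTop (𝓝 c) := by
  have hcross : ∀ᵐ x ∂μ, ∀ p q : ℚ, p < q →
      x ∉ unboundedBirkhoffSumSet T (fun y => f y - q) ∩
        unboundedBirkhoffSumSet T (fun y => (-f) y - -p) := by
    simp only [ae_all_iff]
    exact fun p q hpq => ae_notMem_inter_unboundedBirkhoffSumSet hT hfm hf (mod_cast hpq)
  filter_upwards [hcross, ae_isBoundedUnder_le_birkhoffAverage hT hfm hf,
    ae_isBoundedUnder_le_birkhoffAverage hT hfm.neg hf.neg] with x hx habove hbelow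
  simp only [birkhoffAverage_neg, Pi.neg_apply] at hbelow
  refine tendsto_of_no_upcrossings dense_univ ?_ habove (isBoundedUnder_le_neg.1 hbelow)
  rintro a - b - hab ⟨hlt, hgt⟩
  obtain ⟨p, hap, hpb⟩ := exists_rat_btwn hab
  obtain ⟨q, hpq, hqb⟩ := exists_rat_btwn hpb
  refine hx p q (mod_cast hpq) ⟨mem_unboundedBirkhoffSumSet_of_frequently_lt hqb hgt,
    mem_unboundedBirkhoffSumSet_of_frequently_lt (neg_lt_neg hap) (hlt.mono fun n hn => ?_)⟩
  simpa only [birkhoffAverage_neg, Pi.neg_apply] using neg_lt_neg hn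

theorem ae_exists_tendsto_birkhoffAverage_real (hT : MeasurePreserving T μ μ)
    (hf : Integrable f μ) :
    ∀ᵐ x ∂μ, ∃ c, Tendsto (fun n => birkhoffAverage ℝ T f n x) atTop (𝓝 c) := by
  have hmeas := hf.aestronglyMeasurable
  have haverage : ∀ᵐ x ∂μ, ∀ n,
      birkhoffAverage ℝ T f n x = birkhoffAverage ℝ T (hmeas.mk f) n x := ae_all_iff.2 fun n =>
    hT.quasiMeasurePreserving.birkhoffAverage_ae_eq_of_ae_eq ℝ hmeas.ae_eq_mk n
  filter_upwards [haverage, ae_exists_tendsto_birkhoffAverage_of_measurable hT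
    hmeas.stronglyMeasurable_mk.measurable (hf.congr hmeas.ae_eq_mk)] with x hx hlim
  simpa only [hx] using hlim

theorem ae_exists_tendsto_birkhoffAverage {E : Type*} [NormedAddCommGroup E] [NormedSpace ℝ E]
    [FiniteDimensional ℝ E] {f : X → E} (hT : MeasurePreserving T μ μ) (hf : Integrable f μ) :
    ∀ᵐ x ∂μ, ∃ v, Tendsto (fun n => birkhoffAverage ℝ T f n x) atTop (𝓝 v) := by
  let e := (Module.finBasis ℝ E).equivFunL
  let coord i : E →L[ℝ] ℝ := .comp (.proj i) e.toContinuousLinearMap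
  have hcoord : ∀ᵐ x ∂μ, ∀ i, ∃ c,
      Tendsto (fun n => birkhoffAverage ℝ T (coord i ∘ f) n x) atTop (𝓝 c) := ae_all_iff.2 fun i =>
    ae_exists_tendsto_birkhoffAverage_real hT ((coord i).integrable_comp hf)
  filter_upwards [hcoord] with x hx
  choose w hw using hx
  simp only [← map_birkhoffAverage ℝ] at hw
  have hlim : Tendsto (fun n => e (birkhoffAverage ℝ T f n x)) atTop (𝓝 w) := tendsto_pi_nhds.2 hw
  exact ⟨e.symm w, by simpa [Function.comp_def] using (e.symm.continuous.tendsto w).comp hlim⟩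

end PointwiseErgodic

section InvariantMean

variable {X E : Type*} [NormedAddCommGroup E] [NormedSpace ℝ E] {T : X → X} {f : X → E} {C : ℝ}

theorem norm_birkhoffAverage_le (hC : ∀ x, ‖f x‖ ≤ C) (n : ℕ) (x : X) :
    ‖birkhoffAverage ℝ T f n x‖ ≤ C := by
  have hsum : ‖birkhoffSum T f n x‖ ≤ n * C := by
    simpa [birkhoffSum] using norm_sum_le_of_le (Finset.range n) fun i _ => hC (T^[i] x)
  rw [birkhoffAverage, norm_smul, norm_inv, Real.norm_natCast]
  exact inv_mul_le_of_le_mul₀ n.cast_nonneg ((norm_nonneg _).trans (hC x)) hsum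

variable [MeasurableSpace X] {μ : Measure X}

theorem integral_birkhoffAverage (hT : MeasurePreserving T μ μ) (hf : Integrable f μ) {n : ℕ}
    (hn : n ≠ 0) : ∫ x, birkhoffAverage ℝ T f n x ∂μ = ∫ x, f x ∂μ := by
  have hiter : ∀ i, ∫ x, f (T^[i] x) ∂μ = ∫ x, f x ∂μ := fun i =>
    integral_comp_eq_of_measurePreserving (hT.iterate i) hf.aestronglyMeasurable
  have hn' : (n : ℝ) ≠ 0 := Nat.cast_ne_zero.2 hn
  simp only [birkhoffAverage, birkhoffSum]
  rw [integral_smul, integral_finsetSum (f := fun i x => f (T^[i] x)) _ fun i _ =>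
    (hT.iterate i).integrable_comp_of_integrable hf]
  simp only [hiter, Finset.sum_const, Finset.card_range]
  rw [← Nat.cast_smul_eq_nsmul ℝ, inv_smul_smul₀ hn']

theorem exists_integrable_tendsto_birkhoffAverage [FiniteDimensional ℝ E] [IsFiniteMeasure μ]
    (hT : MeasurePreserving T μ μ) (hf : AEStronglyMeasurable f μ) (hC : ∀ x, ‖f x‖ ≤ C) :
    ∃ F : X → E, Integrable F μ ∧
      (∀ᵐ x ∂μ, Tendsto (fun n => birkhoffAverage ℝ T f n x) atTop (𝓝 (F x))) ∧
      ∫ x, F x ∂μ = ∫ x, f x ∂μ := by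
  have hfi : Integrable f μ := .of_bound hf C (ae_of_all _ hC)
  let F x := limUnder atTop fun n => birkhoffAverage ℝ T f n x
  have hF : ∀ᵐ x ∂μ, Tendsto (fun n => birkhoffAverage ℝ T f n x) atTop (𝓝 (F x)) :=
    (ae_exists_tendsto_birkhoffAverage hT hfi).mono fun x hx => tendsto_nhds_limUnder hx
  have hmeas : ∀ n, AEStronglyMeasurable (birkhoffAverage ℝ T f n) μ := fun n =>
    (integrable_birkhoffSum hT hfi n).aestronglyMeasurable.const_smul _
  have hFC : ∀ᵐ x ∂μ, ‖F x‖ ≤ C := by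
    filter_upwards [hF] with x hx
    exact le_of_tendsto' hx.norm fun n => norm_birkhoffAverage_le hC n x
  have hlim : Tendsto (fun n => ∫ x, birkhoffAverage ℝ T f n x ∂μ) atTop (𝓝 (∫ x, F x ∂μ)) :=
    tendsto_integral_of_dominated_convergence (fun _ => C) hmeas (integrable_const C)
      (fun n => ae_of_all _ (norm_birkhoffAverage_le hC n)) hF
  refine ⟨F, .of_bound (aestronglyMeasurable_of_tendsto_ae atTop hmeas hF) C hFC, hF,
    tendsto_nhds_unique hlim (tendsto_const_nhds.congr' ?_)⟩
  filter_upwards [eventually_ne_atTop 0] with n hn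
  exact (integral_birkhoffAverage hT hfi hn).symm

theorem rotM_subset_rotP {k : ℕ} {φ : X → Fin k → ℝ} (hφ : Measurable φ) (hC : ∀ x, ‖φ x‖ ≤ C)
    (hconv : Convex ℝ (rotP T φ)) : rotM T φ ⊆ rotP T φ := by
  rintro _ ⟨μ, hμ, hT, rfl⟩
  obtain ⟨F, hFi, hF, hmean⟩ :=
    exists_integrable_tendsto_birkhoffAverage hT hφ.aestronglyMeasurable hC
  rw [← hmean]
  exact integral_mem_of_convex hconv hFi (hF.mono fun x hx => ⟨x, hx⟩)

end InvariantMean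

section KrylovBogoliubov

/-- The empirical measure `r⁻¹ ∑_{i < r} δ_{Tⁱ x}` of an orbit segment, whose integrals are the
Birkhoff averages; for `r = 0` it is the zero measure. -/
noncomputable def orbitMeasure {X : Type*} [MeasurableSpace X] (T : X → X) (x : X) (r : ℕ) :
    Measure X :=
  (r : ENNReal)⁻¹ • ∑ i ∈ Finset.range r, Measure.dirac (T^[i] x)

section

variable {X : Type*} [MeasurableSpace X] {T : X → X}

theorem isProbabilityMeasure_orbitMeasure (x : X) {r : ℕ} (hr : r ≠ 0) :
    IsProbabilityMeasure (orbitMeasure T x r) := by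
  refine ⟨?_⟩
  simp only [orbitMeasure, Measure.smul_apply, Measure.finsetSum_apply, measure_univ,
    Finset.sum_const, Finset.card_range, nsmul_eq_mul, mul_one, smul_eq_mul]
  exact ENNReal.inv_mul_cancel (Nat.cast_ne_zero.2 hr) (ENNReal.natCast_ne_top r)

theorem integral_orbitMeasure {f : X → ℝ} (hf : Measurable f) (x : X) (r : ℕ) :
    ∫ y, f y ∂(orbitMeasure T x r) = birkhoffAverage ℝ T f r x := by
  rw [orbitMeasure, integral_smul_measure, integral_finsetSum_measure fun i _ =>
    (integrable_dirac' hf.stronglyMeasurable (by simp))]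
  simp [birkhoffAverage, birkhoffSum, integral_dirac' f _ hf.stronglyMeasurable]

end

theorem tendsto_birkhoffAverage_comp_sub {ι X E : Type*} [NormedAddCommGroup E] [NormedSpace ℝ E]
    {T : X → X} {f : X → E} {C : ℝ} (hC : ∀ x, ‖f x‖ ≤ C) {l : Filter ι} {r : ι → ℕ}
    (hr : Tendsto r l atTop) (x : ι → X) :
    Tendsto (fun i => birkhoffAverage ℝ T (f ∘ T) (r i) (x i) - birkhoffAverage ℝ T f (r i) (x i))
      l (𝓝 0) := by
  have hlim : Tendsto (fun i => (C + C) / (r i : ℝ)) l (𝓝 0) :=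
    tendsto_const_nhds.div_atTop (tendsto_natCast_atTop_atTop.comp hr)
  refine squeeze_zero_norm (fun i => ?_) hlim
  have hshift :
      birkhoffAverage ℝ T (f ∘ T) (r i) (x i) = birkhoffAverage ℝ T f (r i) (T (x i)) := by
    simp only [birkhoffAverage, birkhoffSum, Function.comp_apply,
      (Function.Commute.refl T).iterate_right _ |>.eq]
  rw [hshift, ← dist_eq_norm, dist_birkhoffAverage_apply_birkhoffAverage]
  gcongr
  exact dist_le_norm_add_norm _ _ |>.trans (add_le_add (hC _) (hC _))

variable {Z : Type*} [TopologicalSpace Z] [CompactSpace Z]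

theorem exists_forall_norm_le_of_continuous {E : Type*} [SeminormedAddGroup E] {f : Z → E}
    (hf : Continuous f) : ∃ C, ∀ z, ‖f z‖ ≤ C := by
  simpa using isCompact_univ.exists_bound_of_continuousOn hf.continuousOn

variable [T2Space Z] [MeasurableSpace Z] [BorelSpace Z] {g : Z → Z}

theorem measurePreserving_of_forall_integral_comp_eq {μ : Measure Z} [IsFiniteMeasure μ]
    [μ.Regular] (hg : Continuous g)
    (h : ∀ f : Z → ℝ, Continuous f → ∫ z, f (g z) ∂μ = ∫ z, f z ∂μ) : MeasurePreserving g μ μ := by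
  have hregular : (μ.map g).Regular := by
    have : (μ.map g).InnerRegularCompactLTTop := .map_of_continuous hg
    infer_instance
  refine ⟨hg.measurable, Measure.ext_of_integral_eq_on_compactlySupported fun f => ?_⟩
  exact (integral_map hg.aemeasurable f.continuous.aestronglyMeasurable).trans (h f f.continuous)

theorem exists_regular_isProbabilityMeasure_forall_integral_eq (μ : Measure Z)
    [IsProbabilityMeasure μ] :
    ∃ ν : Measure Z, ν.Regular ∧ IsProbabilityMeasure ν ∧
      ∀ f : Z → ℝ, Continuous f → ∫ z, f z ∂μ = ∫ z, f z ∂ν := by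
  obtain ⟨ν, hregular, _, hν⟩ := Measure.exists_regular_eq_of_compactSpace μ
  have hν' : ∀ f : Z → ℝ, Continuous f → ∫ z, f z ∂μ = ∫ z, f z ∂ν := fun f hf =>
    hν (.mkOfCompact ⟨f, hf⟩)
  refine ⟨ν, hregular, isProbabilityMeasure_iff_real.2 ?_, hν'⟩
  simpa using (hν' (fun _ => 1) continuous_const).symm

theorem exists_regular_tendsto_birkhoffAverage {ι : Type*} (l : Ultrafilter ι) {r : ι → ℕ}
    (hr : Tendsto r l atTop) (z : ι → Z) :
    ∃ μ : Measure Z, μ.Regular ∧ IsProbabilityMeasure μ ∧ ∀ f : Z → ℝ, Continuous f →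
      Tendsto (fun i => birkhoffAverage ℝ g f (r i) (z i)) l (𝓝 (∫ z, f z ∂μ)) := by
  have hprob : ∀ᶠ i in l, ∃ ν : ProbabilityMeasure Z,
      (ν : Measure Z) = orbitMeasure g (z i) (r i) :=
    (hr.eventually_ne_atTop 0).mono fun i hi => ⟨⟨_, isProbabilityMeasure_orbitMeasure _ hi⟩, rfl⟩
  obtain ⟨ν, hν⟩ := hprob.choice
  have hlim : Tendsto ν l (𝓝 (l.map ν).lim) := (l.map ν).le_nhds_lim
  obtain ⟨μ, hregular, hμ, hμ_integral⟩ := exists_regular_isProbabilityMeasure_forall_integral_eq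
    ((l.map ν).lim : Measure Z)
  refine ⟨μ, hregular, hμ, fun f hf => ?_⟩
  rw [← hμ_integral f hf]
  refine (ProbabilityMeasure.tendsto_iff_forall_integral_tendsto.1 hlim
    (.mkOfCompact ⟨f, hf⟩)).congr' ?_
  filter_upwards [hν] with i hi
  simp only [hi, BoundedContinuousFunction.mkOfCompact_apply, ContinuousMap.coe_mk,
    integral_orbitMeasure hf.measurable]

theorem exists_measurePreserving_tendsto_birkhoffAverage {ι : Type*} (hg : Continuous g)
    (l : Ultrafilter ι) {r : ι → ℕ} (hr : Tendsto r l atTop) (z : ι → Z) :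
    ∃ μ : Measure Z, IsProbabilityMeasure μ ∧ MeasurePreserving g μ μ ∧
      ∀ f : Z → ℝ, Continuous f →
        Tendsto (fun i => birkhoffAverage ℝ g f (r i) (z i)) l (𝓝 (∫ z, f z ∂μ)) := by
  obtain ⟨μ, hregular, hμ, hlim⟩ := exists_regular_tendsto_birkhoffAverage (g := g) l hr z
  refine ⟨μ, hμ, measurePreserving_of_forall_integral_comp_eq hg fun f hf => ?_, hlim⟩
  obtain ⟨C, hC⟩ := exists_forall_norm_le_of_continuous hf
  exact sub_eq_zero.1 <| tendsto_nhds_unique ((hlim _ (hf.comp hg)).sub (hlim f hf))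
    (tendsto_birkhoffAverage_comp_sub hC hr z)

variable {k : ℕ} {φ : Z → Fin k → ℝ}

theorem rotMZ_subset_rotM (hg : Continuous g) (hφ : Continuous φ) : rotMZ g φ ⊆ rotM g φ := by
  rintro v ⟨z, r, hr, hv⟩
  obtain ⟨l, hl⟩ := Ultrafilter.exists_le (atTop : Filter ℕ)
  obtain ⟨μ, hμ, hgμ, hlim⟩ :=
    exists_measurePreserving_tendsto_birkhoffAverage hg l (hr.mono_left hl) z
  obtain ⟨C, hC⟩ := exists_forall_norm_le_of_continuous hφ
  have hφi : Integrable φ μ := .of_bound hφ.measurable.aestronglyMeasurable C (ae_of_all _ hC)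
  refine ⟨μ, hμ, hgμ, funext fun j => ?_⟩
  let proj : (Fin k → ℝ) →L[ℝ] ℝ := .proj j
  have hvj : Tendsto (fun i => birkhoffAverage ℝ g (proj ∘ φ) (r i) (z i)) atTop (𝓝 (v j)) := by
    simp only [← map_birkhoffAverage ℝ]
    exact tendsto_pi_nhds.1 hv j
  have hmean : (∫ z, φ z ∂μ) j = ∫ z, φ z j ∂μ := (proj.integral_comp_comm hφi).symm
  rw [hmean]
  exact tendsto_nhds_unique (hlim _ (proj.continuous.comp hφ)) (hvj.mono_left hl)

end KrylovBogoliubov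

theorem rotP_subset_rotMZ {Z : Type*} {k : ℕ} {g : Z → Z} {φ : Z → Fin k → ℝ} :
    rotP g φ ⊆ rotMZ g φ :=
  fun _ ⟨z, hz⟩ => ⟨fun _ => z, id, tendsto_id, hz⟩

theorem stmt1_general {Z : Type*} [TopologicalSpace Z] [CompactSpace Z] [T2Space Z]
    [MeasurableSpace Z] [BorelSpace Z] {k : ℕ} (g : Z → Z) (hg : Continuous g)
    (φ : Z → Fin k → ℝ) (hφ : Continuous φ) (hconv : Convex ℝ (rotP g φ)) :
    rotM g φ = rotP g φ ∧ rotP g φ = rotMZ g φ := by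
  obtain ⟨C, hC⟩ := exists_forall_norm_le_of_continuous hφ
  have hMP : rotM g φ ⊆ rotP g φ := rotM_subset_rotP hφ.measurable hC hconv
  have hMZM : rotMZ g φ ⊆ rotM g φ := rotMZ_subset_rotM hg hφ
  exact ⟨hMP.antisymm (rotP_subset_rotMZ.trans hMZM),
    rotP_subset_rotMZ.antisymm (hMZM.trans hMP)⟩

/-- If the pointwise rotation set is convex then the measure, pointwise,
and Misiurewicz–Ziemian rotation sets all coincide. -/
theorem stmt1 {Z : Type*} [MetricSpace Z] [CompactSpace Z] [MeasurableSpace Z] [BorelSpace Z]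
    {k : ℕ} (g : Z → Z) (hg : Continuous g) (φ : Z → Fin k → ℝ) (hφ : Continuous φ)
    (hconv : Convex ℝ (rotP g φ)) :
    rotM g φ = rotP g φ ∧ rotP g φ = rotMZ g φ :=
  stmt1_general g hg φ hφ hconv
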